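/- Let I ⊆ T and suppose Re(s_{1i}) + Re(s_{(N−1)i}) + Σ_{2≤j≤N−2, j≠i} Re(s_{ij}) + 1 < 0 for every i ∈ T∖I, and Re(s_{ij}) > −1 for all i,j ∈ T∖I with i < j. Then ∫_{(ℚ_p∖ℤ_p)^{|T∖I|}} F₁(s,x;N) ∏_{i∈T∖I} dx_i = p^{M(s)} ∫_{ℤ_p^{|T∖I|}} [ ∏_{2≤i<j≤N−2, i,j∈T∖I} |y_i−y_j|_p^{s_{ij}} / ∏_{i∈T∖I} |y_i|_p^{2+s_{1i}+s_{(N−1)i}+Σ_{2≤j≤N−2, j≠i} s_{ij}} ] ∏_{i∈T∖I} dy_i, where M(s) = |T∖I| + Σ_{i∈T∖I}(s_{1i}+s_{(N−1)i}) + Σ_{2≤i<j≤N−2, i∈T∖I, j∈T} s_{ij} + Σ_{2≤i<j≤N−2, i∈I, j∈T∖I} s_{ij}. -/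

import Mathlib

open MeasureTheory Finset

noncomputable section

instance padicMS (p : ℕ) [Fact p.Prime] : MeasurableSpace ℚ_[p] := borel _
instance padicBS (p : ℕ) [Fact p.Prime] : BorelSpace ℚ_[p] := ⟨rfl⟩

/-- The closed unit ball of `ℚ_[p]` (i.e. `ℤ_[p]`) as a positive compact subset. -/
def padicBall (p : ℕ) [Fact p.Prime] : TopologicalSpace.PositiveCompacts ℚ_[p] where
  carrier := Metric.closedBall 0 1
  isCompact' := isCompact_closedBall 0 1
  interior_nonempty' := ⟨0, Metric.ball_subset_interior_closedBall (Metric.mem_ball_self one_pos)⟩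

/-- The Haar measure on `(ℚ_[p], +)`, normalized so that `ℤ_[p]` has measure `1`. -/
def padicHaar (p : ℕ) [Fact p.Prime] : Measure ℚ_[p] :=
  Measure.addHaarMeasure (padicBall p)

instance padicHaarSF (p : ℕ) [Fact p.Prime] : SigmaFinite (padicHaar p) := by
  unfold padicHaar; infer_instance

/-- The product of normalized Haar measures on a finite power of `ℚ_[p]`. -/
def padicPi (p : ℕ) [Fact p.Prime] (ι : Type) [Fintype ι] : Measure (ι → ℚ_[p]) :=
  Measure.pi fun _ => padicHaar p

/-- `T = {2, …, N-2}`. -/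
def Tset (N : ℕ) : Finset ℕ := Finset.Icc 2 (N - 2)

/-- The ordered pairs `(i, j)` with `i < j` and `i, j ∈ A`. -/
def pairsIn (A : Finset ℕ) : Finset (ℕ × ℕ) := (A ×ˢ A).filter fun q => q.1 < q.2

/-- The coordinates of a point of `ℚ_p^A`, as a function on `ℕ` (junk value `0` off `A`). -/
def padicCoord {p : ℕ} [Fact p.Prime] {A : Finset ℕ} (x : A → ℚ_[p]) (n : ℕ) : ℚ_[p] :=
  if h : n ∈ A then x ⟨n, h⟩ else 0

/-!
On `ℚ_p ∖ ℤ_p` substitute `x_i = 1 / (p y_i)`, which exchanges `ℚ_p ∖ ℤ_p` with `ℤ_p ∖ {0}`. The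
multiplicative Haar measure `dx / |x|` is invariant under inversion and scaling, so the Jacobian is
`∏ 1 / |p y_i²|`. Since `|x_i - x_j| = |y_i - y_j| / |p y_i y_j|`, the integrand turns into a
product of the same shape, and comparing exponents gives the power of `p` and the new weights.
-/

open scoped ENNReal NNReal Pointwise

section UnitsHaar

variable {K : Type*} [NontriviallyNormedField K] [MeasurableSpace K] [BorelSpace K]

theorem measurableEmbedding_unitsVal : MeasurableEmbedding (Units.val : Kˣ → K) where
  injective := Units.val_injective
  measurable := comap_measurable _
  measurableSet_image' := by
    rintro _ ⟨t, ht, rfl⟩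
    rw [Set.image_preimage_eq_inter_range]
    exact ht.inter Units.isOpenEmbedding_val.isOpen_range.measurableSet

instance units_borelSpace : BorelSpace Kˣ where
  measurable_eq := by
    rw [Units.isEmbedding_val₀.eq_induced, borel_comap, ← BorelSpace.measurable_eq]
    rfl

/-- The measure `dx / ‖x‖` on `Kˣ`, where `dx` is `μ`. It is a Haar measure of `Kˣ` when `μ` is one
of `(K, +)` and the norm is the module of `K`, i.e. multiplication by `u` scales `μ` by `‖u‖`. -/
def unitsHaar (μ : Measure K) : Measure Kˣ :=
  (μ.comap Units.val).withDensity fun u => ((‖(u : K)‖₊⁻¹ : ℝ≥0) : ℝ≥0∞)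

variable [ProperSpace K] (μ : Measure K) [μ.IsAddHaarMeasure]

instance units_secondCountable : SecondCountableTopology Kˣ :=
  Units.isEmbedding_val₀.secondCountableTopology

theorem map_mul_left_comap_unitsVal (u : Kˣ) :
    (μ.comap Units.val).map (u * ·) =
      (distribHaarChar K u)⁻¹ • μ.comap (Units.val : Kˣ → K) := by
  ext t ht
  have himage : Units.val '' ((u * ·) ⁻¹' t) = u⁻¹ • Units.val '' t := by
    rw [← Set.image_smul_comm Units.val u⁻¹ _ fun v => rfl]
    exact congrArg _ (Set.preimage_smul u t)
  rw [Measure.map_apply (measurable_const_mul u) ht, measurableEmbedding_unitsVal.comap_apply,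
    Measure.smul_apply, measurableEmbedding_unitsVal.comap_apply, himage, ← distribHaarChar_mul,
    map_inv, ENNReal.smul_def, smul_eq_mul]

theorem isMulLeftInvariant_unitsHaar (hK : ∀ u : Kˣ, distribHaarChar K u = ‖(u : K)‖₊) :
    (unitsHaar μ).IsMulLeftInvariant := by
  refine ⟨fun u => Measure.ext fun t ht => ?_⟩
  have hu : ‖(u : K)‖₊ ≠ 0 := by simp
  have hdensity : Measurable fun v : Kˣ => ((‖(v : K)‖₊⁻¹ : ℝ≥0) : ℝ≥0∞) := by fun_prop
  have hpre := ht.preimage (measurable_const_mul u)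
  calc (unitsHaar μ).map (u * ·) t
      = ∫⁻ v in (u * ·) ⁻¹' t, ‖(u : K)‖₊ * ((‖((u * v : Kˣ) : K)‖₊⁻¹ : ℝ≥0) : ℝ≥0∞)
          ∂μ.comap Units.val := by
        rw [Measure.map_apply (measurable_const_mul u) ht, unitsHaar, withDensity_apply _ hpre]
        refine lintegral_congr fun v => ?_
        rw [← ENNReal.coe_mul, Units.val_mul, nnnorm_mul, mul_inv, mul_inv_cancel_left₀ hu]
    _ = ‖(u : K)‖₊ * ∫⁻ v in t, ((‖(v : K)‖₊⁻¹ : ℝ≥0) : ℝ≥0∞)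
          ∂(μ.comap Units.val).map (u * ·) := by
        rw [lintegral_const_mul _ (by fun_prop), setLIntegral_map ht hdensity
          (measurable_const_mul u)]
    _ = unitsHaar μ t := by
        rw [map_mul_left_comap_unitsVal, hK, Measure.restrict_smul, lintegral_smul_measure,
          ENNReal.smul_def, smul_eq_mul, ← mul_assoc, ← ENNReal.coe_mul, mul_inv_cancel₀ hu,
          ENNReal.coe_one, one_mul, unitsHaar, withDensity_apply _ ht]

theorem isHaarMeasure_unitsHaar (hK : ∀ u : Kˣ, distribHaarChar K u = ‖(u : K)‖₊) :
    (unitsHaar μ).IsHaarMeasure := by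
  have hval := measurableEmbedding_unitsVal (K := K)
  have hcont : Continuous fun u : Kˣ => ‖(u : K)‖₊⁻¹ := by
    have : Continuous fun u : Kˣ => ‖((u⁻¹ : Kˣ) : K)‖₊ := by fun_prop
    simpa only [Units.val_inv_eq_inv_val, nnnorm_inv] using this
  have : IsFiniteMeasureOnCompacts (μ.comap (Units.val : Kˣ → K)) :=
    IsFiniteMeasureOnCompacts.comap' μ Units.continuous_val hval
  have : IsLocallyFiniteMeasure (unitsHaar μ) := IsLocallyFiniteMeasure.withDensity_coe hcont
  have : (μ.comap (Units.val : Kˣ → K)).IsOpenPosMeasure :=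
    .comap μ Units.isOpenEmbedding_val
  have : (unitsHaar μ).IsOpenPosMeasure :=
    (withDensity_absolutelyContinuous' (by fun_prop) (by simp)).isOpenPosMeasure
  have := isMulLeftInvariant_unitsHaar μ hK
  constructor

variable {μ} in
theorem lintegral_eq_lintegral_unitsHaar {f : K → ℝ≥0∞} (hf : Measurable f) :
    ∫⁻ x, f x ∂μ = ∫⁻ u : Kˣ, ‖(u : K)‖₊ * f u ∂unitsHaar μ := by
  have hval := measurableEmbedding_unitsVal (K := K)
  have hrange : ∀ᵐ x ∂μ, x ∈ Set.range (Units.val : Kˣ → K) := by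
    filter_upwards [measure_eq_zero_iff_ae_notMem.1 (measure_singleton (0 : K))] with x hx
    exact ⟨Units.mk0 x hx, rfl⟩
  calc ∫⁻ x, f x ∂μ = ∫⁻ u : Kˣ, f u ∂μ.comap Units.val := by
        rw [← hval.lintegral_map, hval.map_comap, Measure.restrict_eq_self_of_ae_mem hrange]
    _ = ∫⁻ u : Kˣ, ‖(u : K)‖₊ * f u ∂unitsHaar μ := by
        rw [unitsHaar, lintegral_withDensity_eq_lintegral_mul _ (by fun_prop) (by fun_prop)]
        refine lintegral_congr fun u => ?_
        rw [Pi.mul_apply, ← mul_assoc, ← ENNReal.coe_mul, inv_mul_cancel₀ (by simp),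
          ENNReal.coe_one, one_mul]

/-- Inversion composed with scaling, `x ↦ (c x)⁻¹`; it fixes `0` because `0⁻¹ = 0`. -/
def scaledInv (c : Kˣ) : K ≃ᵐ K where
  toFun x := (c * x)⁻¹
  invFun x := (c * x)⁻¹
  left_inv x := by field_simp
  right_inv x := by field_simp
  measurable_toFun := by dsimp; fun_prop
  measurable_invFun := by dsimp; fun_prop

theorem measurePreserving_scaledInv (hK : ∀ u : Kˣ, distribHaarChar K u = ‖(u : K)‖₊) (c : Kˣ) :
    MeasurePreserving (scaledInv c)
      (μ.withDensity fun x => ((‖(c : K) * x ^ 2‖₊⁻¹ : ℝ≥0) : ℝ≥0∞)) μ := by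
  have := isHaarMeasure_unitsHaar μ hK
  have hmeas := (scaledInv c).measurable
  refine ⟨hmeas, Measure.ext_of_lintegral _ fun f hf => ?_⟩
  have hscaled : Measurable fun x => f (scaledInv c x) := hf.comp hmeas
  calc ∫⁻ x, f x ∂(μ.withDensity _).map (scaledInv c)
      = ∫⁻ x, ((‖(c : K) * x ^ 2‖₊⁻¹ : ℝ≥0) : ℝ≥0∞) * f (scaledInv c x) ∂μ := by
        rw [lintegral_map hf hmeas,
          lintegral_withDensity_eq_lintegral_mul _ (by fun_prop) hscaled]
        rfl
    _ = ∫⁻ u : Kˣ, ‖(((c * u)⁻¹ : Kˣ) : K)‖₊ * f ((c * u)⁻¹ : Kˣ) ∂unitsHaar μ := by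
        rw [lintegral_eq_lintegral_unitsHaar (by fun_prop)]
        refine lintegral_congr fun u => ?_
        rw [← mul_assoc, ← ENNReal.coe_mul]
        congr 2
        · simp only [nnnorm_mul, nnnorm_pow, mul_inv_rev, Units.val_mul, Units.val_inv_eq_inv_val,
            nnnorm_inv]
          field_simp
        · simp [scaledInv]
    _ = ∫⁻ u : Kˣ, ‖(u : K)‖₊ * f u ∂unitsHaar μ := by
        rw [lintegral_mul_left_eq_self (fun u : Kˣ => ‖((u⁻¹ : Kˣ) : K)‖₊ * f (u⁻¹ : Kˣ)) c,
          lintegral_inv_eq_self (fun u : Kˣ => (‖(u : K)‖₊ : ℝ≥0∞) * f u)]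
    _ = ∫⁻ x, f x ∂μ := (lintegral_eq_lintegral_unitsHaar hf).symm

end UnitsHaar

section Pi

variable {ι : Type*} [Fintype ι]

theorem lintegral_fin_prod_eq_prod {n : ℕ} {X : Fin n → Type*} [∀ i, MeasurableSpace (X i)]
    (μ : ∀ i, Measure (X i)) [∀ i, SigmaFinite (μ i)] {f : ∀ i, X i → ℝ≥0∞}
    (hf : ∀ i, Measurable (f i)) :
    ∫⁻ x, ∏ i, f i (x i) ∂Measure.pi μ = ∏ i, ∫⁻ x, f i x ∂μ i := by
  induction n with
  | zero => simp
  | succ n ih =>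
    have hzero : Measurable (f 0) := hf 0
    have htail : Measurable fun x : ∀ i : Fin n, X i.succ => ∏ i, f i.succ (x i) :=
      Finset.measurable_prod _ fun i _ => (hf i.succ).comp (measurable_pi_apply i)
    rw [← (measurePreserving_piFinSuccAbove μ 0).symm.lintegral_comp_emb
      (MeasurableEquiv.measurableEmbedding _)]
    simp only [MeasurableEquiv.piFinSuccAbove_symm_apply, Fin.insertNthEquiv, Equiv.coe_fn_mk,
      Fin.insertNth_zero, Fin.prod_univ_succ, Fin.cons_zero, Fin.cons_succ]
    rw [← ih (fun i => μ i.succ) fun i => hf i.succ]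
    exact lintegral_prod_mul (μ := μ 0) (ν := .pi fun i => μ i.succ) hzero.aemeasurable
      htail.aemeasurable

theorem lintegral_fintype_prod_eq_prod {X : ι → Type*} [∀ i, MeasurableSpace (X i)]
    (μ : ∀ i, Measure (X i)) [∀ i, SigmaFinite (μ i)] {f : ∀ i, X i → ℝ≥0∞}
    (hf : ∀ i, Measurable (f i)) :
    ∫⁻ x, ∏ i, f i (x i) ∂Measure.pi μ = ∏ i, ∫⁻ x, f i x ∂μ i := by
  let e := (Fintype.equivFin ι).symm
  rw [← (measurePreserving_piCongrLeft μ e).lintegral_comp_emb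
    (MeasurableEquiv.measurableEmbedding _)]
  simp_rw [← e.prod_comp, MeasurableEquiv.coe_piCongrLeft, Equiv.piCongrLeft_apply_apply]
  exact lintegral_fin_prod_eq_prod (fun i => μ (e i)) fun i => hf (e i)

theorem pi_withDensity {X : ι → Type*} [∀ i, MeasurableSpace (X i)]
    (μ : ∀ i, Measure (X i)) [∀ i, SigmaFinite (μ i)] {f : ∀ i, X i → ℝ≥0∞}
    (hf : ∀ i, Measurable (f i)) [∀ i, SigmaFinite ((μ i).withDensity (f i))] :
    Measure.pi (fun i => (μ i).withDensity (f i)) =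
      (Measure.pi μ).withDensity fun x => ∏ i, f i (x i) := by
  refine Measure.pi_eq fun t ht => ?_
  rw [withDensity_apply _ (MeasurableSet.univ_pi ht), Measure.restrict_pi_pi,
    lintegral_fintype_prod_eq_prod _ hf]
  exact prod_congr rfl fun i _ => (withDensity_apply _ (ht i)).symm

theorem setIntegral_pi_eq_setIntegral_preimage_smul {X Y : ι → Type*}
    [∀ i, MeasurableSpace (X i)] [∀ i, MeasurableSpace (Y i)] {μ : ∀ i, Measure (X i)}
    {ν : ∀ i, Measure (Y i)} [∀ i, SigmaFinite (μ i)] [∀ i, SigmaFinite (ν i)]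
    (e : ∀ i, X i ≃ᵐ Y i) {J : ∀ i, X i → ℝ≥0} (hJ : ∀ i, Measurable (J i))
    (he : ∀ i, MeasurePreserving (e i) ((μ i).withDensity fun x => (J i x : ℝ≥0∞)) (ν i))
    {E : Type*} [NormedAddCommGroup E] [NormedSpace ℝ E] (F : (∀ i, Y i) → E)
    {t : Set (∀ i, Y i)} (ht : MeasurableSet t) :
    ∫ y in t, F y ∂Measure.pi ν =
      ∫ x in (fun x i => e i (x i)) ⁻¹' t, (∏ i, J i (x i)) • F (fun i => e i (x i))
        ∂Measure.pi μ := by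
  let Φ : (∀ i, X i) ≃ᵐ (∀ i, Y i) := MeasurableEquiv.piCongrRight e
  have hΦ : MeasurePreserving Φ
      ((Measure.pi μ).withDensity fun x => ((∏ i, J i (x i) : ℝ≥0) : ℝ≥0∞)) (Measure.pi ν) := by
    simp only [ENNReal.ofNNReal_finsetProd]
    rw [← pi_withDensity μ fun i => (hJ i).coe_nnreal_ennreal]
    exact measurePreserving_pi _ _ he
  rw [← hΦ.setIntegral_preimage_emb Φ.measurableEmbedding,
    setIntegral_withDensity_eq_setIntegral_smul (by fun_prop) _ (Φ.measurable ht)]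
  rfl

end Pi

section PadicHaar

variable {p : ℕ} [Fact p.Prime]

instance padicHaar_isAddHaarMeasure : (padicHaar p).IsAddHaarMeasure := by
  unfold padicHaar
  infer_instance

theorem padicHaar_closedBall_one : padicHaar p (Metric.closedBall 0 1) = 1 :=
  Measure.addHaarMeasure_self (K₀ := padicBall p)

theorem existsUnique_mem_ball_natCast {x : ℚ_[p]} (hx : ‖x‖ ≤ 1) :
    ∃! k, k < p ∧ x ∈ Metric.ball (k : ℚ_[p]) 1 := by
  have h := PadicInt.existsUnique_mem_range (p := p) ⟨x, hx⟩
  simp only [IsLocalRing.mem_maximalIdeal, PadicInt.mem_nonunits, PadicInt.norm_def] at h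
  simpa only [Metric.mem_ball, dist_eq_norm] using mod_cast h

theorem ball_natCast_subset_closedBall (k : ℕ) :
    Metric.ball (k : ℚ_[p]) 1 ⊆ Metric.closedBall 0 1 := by
  rw [IsUltrametricDist.closedBall_eq_of_mem (x := (0 : ℚ_[p])) (y := (k : ℚ_[p]))]
  · exact Metric.ball_subset_closedBall
  · simpa using Padic.norm_int_le_one (p := p) k

theorem closedBall_one_eq_biUnion_ball_natCast :
    Metric.closedBall (0 : ℚ_[p]) 1 = ⋃ k ∈ Finset.range p, Metric.ball (k : ℚ_[p]) 1 := by
  refine subset_antisymm (fun x hx => ?_) (Set.iUnion₂_subset fun k _ =>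
    ball_natCast_subset_closedBall k)
  obtain ⟨k, ⟨hk, hxk⟩, -⟩ := existsUnique_mem_ball_natCast (mem_closedBall_zero_iff.1 hx)
  exact Set.mem_biUnion (Finset.mem_coe.2 (Finset.mem_range.2 hk)) hxk

theorem pairwiseDisjoint_ball_natCast :
    (Finset.range p : Set ℕ).PairwiseDisjoint fun k => Metric.ball (k : ℚ_[p]) 1 := by
  refine fun j hj k hk hjk => Set.disjoint_left.2 fun x hxj hxk => hjk ?_
  have hx := mem_closedBall_zero_iff.1 (ball_natCast_subset_closedBall j hxj)
  exact (existsUnique_mem_ball_natCast hx).unique ⟨by simpa using hj, hxj⟩ ⟨by simpa using hk, hxk⟩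

theorem padicHaar_ball_one : padicHaar p (Metric.ball 0 1) = (p : ℝ≥0∞)⁻¹ := by
  have htranslate (k : ℕ) :
      padicHaar p (Metric.ball (k : ℚ_[p]) 1) = padicHaar p (Metric.ball 0 1) :=
    Measure.addHaar_ball_center _ _ _
  have hsum := padicHaar_closedBall_one (p := p)
  rw [closedBall_one_eq_biUnion_ball_natCast, measure_biUnion_finset
    pairwiseDisjoint_ball_natCast fun _ _ => measurableSet_ball] at hsum
  simp only [htranslate, Finset.sum_const, Finset.card_range, nsmul_eq_mul] at hsum
  exact ENNReal.eq_inv_of_mul_eq_one_left (by rwa [mul_comm])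

theorem distribHaarChar_eq_padicHaar_closedBall (u : ℚ_[p]ˣ) :
    (distribHaarChar ℚ_[p] u : ℝ≥0∞) = padicHaar p (Metric.closedBall 0 ‖(u : ℚ_[p])‖) := by
  have h := distribHaarChar_mul (padicHaar p) u (Metric.closedBall 0 1)
  rwa [padicHaar_closedBall_one, mul_one, Units.smul_def, smul_closedBall' u.ne_zero, smul_zero,
    mul_one] at h

/-- The uniformizer `p`, as a unit of `ℚ_[p]`. -/
def primeUnit (p : ℕ) [Fact p.Prime] : ℚ_[p]ˣ :=
  Units.mk0 p (by exact_mod_cast (Fact.out : p.Prime).ne_zero)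

theorem norm_primeUnit : ‖(primeUnit p : ℚ_[p])‖ = (p : ℝ)⁻¹ := Padic.norm_p

theorem ball_one_eq_closedBall_inv :
    Metric.ball (0 : ℚ_[p]) 1 = Metric.closedBall 0 (p : ℝ)⁻¹ := by
  ext x
  simpa using (Padic.norm_le_pow_iff_norm_lt_pow_add_one x (-1)).symm

theorem distribHaarChar_primeUnit : distribHaarChar ℚ_[p] (primeUnit p) = (p : ℝ≥0)⁻¹ := by
  have hp0 : (p : ℝ≥0) ≠ 0 := by exact_mod_cast (Fact.out : p.Prime).ne_zero
  apply ENNReal.coe_injective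
  rw [distribHaarChar_eq_padicHaar_closedBall, norm_primeUnit, ← ball_one_eq_closedBall_inv,
    padicHaar_ball_one, ENNReal.coe_inv hp0, ENNReal.coe_natCast]

theorem distribHaarChar_padic (u : ℚ_[p]ˣ) : distribHaarChar ℚ_[p] u = ‖(u : ℚ_[p])‖₊ := by
  have hnorm : ‖(u : ℚ_[p])‖ = ‖((primeUnit p ^ (u : ℚ_[p]).valuation : ℚ_[p]ˣ) : ℚ_[p])‖ := by
    rw [Units.val_zpow_eq_zpow_val, norm_zpow, norm_primeUnit, inv_zpow',
      ← Padic.norm_eq_zpow_neg_valuation u.ne_zero]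
  have hchar : distribHaarChar ℚ_[p] u =
      distribHaarChar ℚ_[p] (primeUnit p ^ (u : ℚ_[p]).valuation) := by
    apply ENNReal.coe_injective
    rw [distribHaarChar_eq_padicHaar_closedBall, distribHaarChar_eq_padicHaar_closedBall, hnorm]
  rw [hchar, map_zpow, distribHaarChar_primeUnit]
  apply NNReal.coe_injective
  rw [coe_nnnorm, Padic.norm_eq_zpow_neg_valuation u.ne_zero]
  simp

end PadicHaar

section Pairs

variable {A I T : Finset ℕ}

theorem mem_and_mem_of_mem_pairsIn {q : ℕ × ℕ} (hq : q ∈ pairsIn A) : q.1 ∈ A ∧ q.2 ∈ A :=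
  mem_product.1 (mem_filter.1 hq).1

theorem prod_prod_erase_eq_prod_pairsIn {M : Type*} [CommMonoid M] (A : Finset ℕ)
    (f : ℕ → ℕ → M) :
    ∏ i ∈ A, ∏ j ∈ A.erase i, f i j = ∏ q ∈ pairsIn A, f q.1 q.2 * f q.2 q.1 := by
  have hsplit (i j : ℕ) : (if j ≠ i then f i j else 1) =
      (if i < j then f i j else 1) * if j < i then f i j else 1 := by
    rcases lt_trichotomy i j with h | rfl | h
    · simp [h, h.ne', h.not_gt]
    · simp
    · simp [h, h.ne, h.not_gt]
  simp_rw [← filter_ne', prod_filter, hsplit, prod_mul_distrib, pairsIn, prod_filter, prod_product]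
  congr 1
  exact prod_comm

theorem sum_filter_lt_add_sum_filter_lt {M : Type*} [AddCommMonoid M] (hAI : Disjoint A I)
    {f : ℕ → ℕ → M} (hf : ∀ i j, f i j = f j i) :
    ∑ q ∈ A ×ˢ I with q.1 < q.2, f q.1 q.2 + ∑ q ∈ I ×ˢ A with q.1 < q.2, f q.1 q.2 =
      ∑ i ∈ A, ∑ j ∈ I, f i j := by
  simp_rw [sum_filter, sum_product]
  rw [sum_comm (s := I), ← sum_add_distrib]
  refine sum_congr rfl fun i hi => ?_
  rw [← sum_add_distrib]
  refine sum_congr rfl fun j hj => ?_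
  rcases (disjoint_iff_ne.1 hAI i hi j hj).lt_or_gt with h | h <;> simp [h, h.not_gt, hf j i]

theorem sum_pairsIn_filter_add_sum_pairsIn_filter {M : Type*} [AddCommMonoid M] (hI : I ⊆ T)
    {f : ℕ → ℕ → M} (hf : ∀ i j, f i j = f j i) :
    ∑ q ∈ pairsIn T with q.1 ∈ T \ I, f q.1 q.2 +
        ∑ q ∈ pairsIn T with q.1 ∈ I ∧ q.2 ∈ T \ I, f q.1 q.2 =
      ∑ q ∈ pairsIn (T \ I), f q.1 q.2 + ∑ i ∈ T \ I, ∑ j ∈ I, f i j := by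
  have hfst : {q ∈ pairsIn T | q.1 ∈ T \ I} =
      pairsIn (T \ I) ∪ {q ∈ (T \ I) ×ˢ I | q.1 < q.2} := by
    ext q
    have := @hI q.2
    simp only [pairsIn, mem_filter, mem_product, mem_union, mem_sdiff]
    tauto
  have hdisj : Disjoint (pairsIn (T \ I)) {q ∈ (T \ I) ×ˢ I | q.1 < q.2} := by
    refine disjoint_left.2 fun q hq hq' => ?_
    exact (mem_sdiff.1 (mem_and_mem_of_mem_pairsIn hq).2).2 (mem_product.1 (mem_filter.1 hq').1).2
  have hcross : {q ∈ pairsIn T | q.1 ∈ I ∧ q.2 ∈ T \ I} = {q ∈ I ×ˢ (T \ I) | q.1 < q.2} := by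
    ext q
    have := @hI q.1
    simp only [pairsIn, mem_filter, mem_product, mem_sdiff]
    tauto
  rw [hfst, sum_union hdisj, hcross, add_assoc, sum_filter_lt_add_sum_filter_lt sdiff_disjoint hf]

theorem sum_erase_add_sum_sdiff_erase {M : Type*} [AddCommMonoid M] (hI : I ⊆ T) (f : ℕ → M)
    (i : ℕ) : ∑ j ∈ I.erase i, f j + ∑ j ∈ (T \ I).erase i, f j = ∑ j ∈ T.erase i, f j := by
  rw [erase_sdiff_distrib, add_comm, sum_sdiff (erase_subset_erase i hI)]

end Pairs

section KobaNielsen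

variable {K : Type*} [NormedField K]

theorem cpow_sum {ι : Type*} {z : ℂ} (hz : z ≠ 0) (t : Finset ι) (f : ι → ℂ) :
    z ^ ∑ i ∈ t, f i = ∏ i ∈ t, z ^ f i := by
  classical
  induction t using Finset.induction_on with
  | empty => simp
  | insert i t hi ih => rw [sum_insert hi, prod_insert hi, Complex.cpow_add _ _ hz, ih]

theorem norm_mul_cpow (x y : K) (z : ℂ) : (‖x * y‖ : ℂ) ^ z = (‖x‖ : ℂ) ^ z * (‖y‖ : ℂ) ^ z := by
  rw [norm_mul, Complex.ofReal_mul,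
    Complex.mul_cpow_ofReal_nonneg (norm_nonneg x) (norm_nonneg y)]

theorem norm_inv_cpow (x : K) (z : ℂ) : (‖x⁻¹‖ : ℂ) ^ z = (‖x‖ : ℂ) ^ (-z) := by
  rw [norm_inv, Complex.ofReal_inv, Complex.inv_cpow_ofReal_nonneg (norm_nonneg x),
    Complex.cpow_neg]

theorem norm_inv_mul_sub_inv_mul_cpow {c x y : K} (hx : x ≠ 0) (hy : y ≠ 0) (z : ℂ) :
    (‖(c * x)⁻¹ - (c * y)⁻¹‖ : ℂ) ^ z =
      (‖c‖ : ℂ) ^ (-z) * (‖x - y‖ : ℂ) ^ z * ((‖x‖ : ℂ) ^ (-z) * (‖y‖ : ℂ) ^ (-z)) := by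
  have hdiff : (c * x)⁻¹ - (c * y)⁻¹ = c⁻¹ * (y - x) * (x⁻¹ * y⁻¹) := by
    rw [mul_inv, mul_inv]
    field_simp
  rw [hdiff, norm_mul_cpow, norm_mul_cpow, norm_mul_cpow x⁻¹, norm_inv_cpow, norm_inv_cpow,
    norm_inv_cpow, norm_sub_rev]

/-- The Koba–Nielsen integrand `∏_{i ∈ A} ‖x_i‖ ^ a_i · ∏_{i < j in A} ‖x_i - x_j‖ ^ s_ij`. The
indices run over all of `ℕ`, but only the values of `a`, `s` and `x` on `A` matter. -/
def kobaNielsen (A : Finset ℕ) (a : ℕ → ℂ) (s : ℕ → ℕ → ℂ) (x : ℕ → K) : ℂ :=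
  (∏ i ∈ A, (‖x i‖ : ℂ) ^ a i) * ∏ q ∈ pairsIn A, (‖x q.1 - x q.2‖ : ℂ) ^ s q.1 q.2

variable {A : Finset ℕ} {a : ℕ → ℂ} {s : ℕ → ℕ → ℂ} {x : ℕ → K}

theorem kobaNielsen_neg :
    kobaNielsen A (fun i => -a i) s x =
      (∏ q ∈ pairsIn A, (‖x q.1 - x q.2‖ : ℂ) ^ s q.1 q.2) / ∏ i ∈ A, (‖x i‖ : ℂ) ^ a i := by
  simp_rw [kobaNielsen, Complex.cpow_neg, prod_inv_distrib]
  rw [mul_comm, div_eq_mul_inv]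

theorem kobaNielsen_add (hx : ∀ i ∈ A, x i ≠ 0) (b : ℕ → ℂ) :
    kobaNielsen A (fun i => b i + a i) s x =
      (∏ i ∈ A, (‖x i‖ : ℂ) ^ b i) * kobaNielsen A a s x := by
  rw [kobaNielsen, kobaNielsen, ← mul_assoc, ← prod_mul_distrib]
  congr 1
  exact prod_congr rfl fun i hi => Complex.cpow_add _ _ (by simpa using hx i hi)

theorem prod_pairsIn_norm_cpow (hs : ∀ i j, s i j = s j i) (hx : ∀ i ∈ A, x i ≠ 0) :
    ∏ q ∈ pairsIn A, ((‖x q.1‖ : ℂ) ^ s q.1 q.2 * (‖x q.2‖ : ℂ) ^ s q.1 q.2) =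
      ∏ i ∈ A, (‖x i‖ : ℂ) ^ ∑ j ∈ A.erase i, s i j := by
  calc _ = ∏ i ∈ A, ∏ j ∈ A.erase i, (‖x i‖ : ℂ) ^ s i j := by
        rw [prod_prod_erase_eq_prod_pairsIn]
        exact prod_congr rfl fun q _ => by rw [hs q.2 q.1]
    _ = _ := prod_congr rfl fun i hi => (cpow_sum (by simpa using hx i hi) _ _).symm

theorem kobaNielsen_inv_mul {c : K} (hc : c ≠ 0) (hs : ∀ i j, s i j = s j i)
    (hx : ∀ i ∈ A, x i ≠ 0) :
    kobaNielsen A a s (fun i => (c * x i)⁻¹) =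
      (‖c‖ : ℂ) ^ (-(∑ i ∈ A, a i + ∑ q ∈ pairsIn A, s q.1 q.2)) *
        kobaNielsen A (fun i => -(a i + ∑ j ∈ A.erase i, s i j)) s x := by
  have hc' : (‖c‖ : ℂ) ≠ 0 := by simpa using hc
  have hcoord : ∏ i ∈ A, (‖(c * x i)⁻¹‖ : ℂ) ^ a i =
      (‖c‖ : ℂ) ^ (-∑ i ∈ A, a i) * ∏ i ∈ A, (‖x i‖ : ℂ) ^ (-a i) := by
    rw [← sum_neg_distrib, cpow_sum hc', ← prod_mul_distrib]
    exact prod_congr rfl fun i _ => by rw [norm_inv_cpow, norm_mul_cpow]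
  have hpairs : ∏ q ∈ pairsIn A, (‖(c * x q.1)⁻¹ - (c * x q.2)⁻¹‖ : ℂ) ^ s q.1 q.2 =
      (‖c‖ : ℂ) ^ (-∑ q ∈ pairsIn A, s q.1 q.2) *
        (∏ q ∈ pairsIn A, (‖x q.1 - x q.2‖ : ℂ) ^ s q.1 q.2) *
        ∏ i ∈ A, (‖x i‖ : ℂ) ^ (-∑ j ∈ A.erase i, s i j) := by
    simp_rw [← sum_neg_distrib]
    rw [← prod_pairsIn_norm_cpow (s := fun i j => -s i j) (fun i j => by rw [hs]) hx,
      cpow_sum hc', ← prod_mul_distrib, ← prod_mul_distrib]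
    refine prod_congr rfl fun q hq => norm_inv_mul_sub_inv_mul_cpow ?_ ?_ _
    · exact hx _ (mem_and_mem_of_mem_pairsIn hq).1
    · exact hx _ (mem_and_mem_of_mem_pairsIn hq).2
  simp_rw [neg_add_rev]
  rw [kobaNielsen_add hx, kobaNielsen, kobaNielsen, hcoord, hpairs, Complex.cpow_add _ _ hc']
  ring

theorem smul_kobaNielsen_inv_mul {c : K} (hc : c ≠ 0) (hs : ∀ i j, s i j = s j i)
    (hx : ∀ i ∈ A, x i ≠ 0) :
    (∏ i ∈ A, ‖c * x i ^ 2‖₊⁻¹) • kobaNielsen A a s (fun i => (c * x i)⁻¹) =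
      (‖c‖ : ℂ) ^ (-(#A + ∑ i ∈ A, a i + ∑ q ∈ pairsIn A, s q.1 q.2)) *
        kobaNielsen A (fun i => -(2 + a i + ∑ j ∈ A.erase i, s i j)) s x := by
  have hc' : (‖c‖ : ℂ) ≠ 0 := by simpa using hc
  have hjacobian : (((∏ i ∈ A, ‖c * x i ^ 2‖₊⁻¹ : ℝ≥0) : ℝ) : ℂ) =
      (‖c‖ : ℂ) ^ (-#A : ℂ) * ∏ i ∈ A, (‖x i‖ : ℂ) ^ (-2 : ℂ) := by
    simp [Complex.cpow_neg, prod_mul_distrib, mul_comm]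
  have hweights : kobaNielsen A (fun i => -(2 + a i + ∑ j ∈ A.erase i, s i j)) s x =
      (∏ i ∈ A, (‖x i‖ : ℂ) ^ (-2 : ℂ)) *
        kobaNielsen A (fun i => -(a i + ∑ j ∈ A.erase i, s i j)) s x := by
    rw [← kobaNielsen_add hx]
    simp_rw [add_assoc, neg_add (2 : ℂ)]
  rw [NNReal.smul_def, Complex.real_smul, hjacobian, kobaNielsen_inv_mul hc hs hx, hweights,
    add_assoc (#A : ℂ), neg_add (#A : ℂ), Complex.cpow_add _ _ hc']
  ring

end KobaNielsen

section Regions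

variable {p : ℕ} [Fact p.Prime] {A : Finset ℕ}

theorem padicCoord_of_mem (x : A → ℚ_[p]) {n : ℕ} (hn : n ∈ A) : padicCoord x n = x ⟨n, hn⟩ :=
  dif_pos hn

theorem measurable_padicCoord (n : ℕ) : Measurable fun x : A → ℚ_[p] => padicCoord x n := by
  unfold padicCoord
  split_ifs <;> fun_prop

theorem padicCoord_scaledInv (c : ℚ_[p]ˣ) (y : A → ℚ_[p]) :
    padicCoord (fun i => scaledInv c (y i)) = fun n => (c * padicCoord y n)⁻¹ := by
  ext n
  by_cases hn : n ∈ A <;> simp [padicCoord, hn, scaledInv]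

/-- The points of `(ℚ_p ∖ ℤ_p)^A` with pairwise distinct coordinates, `ℚ_p ∖ ℤ_p` being written
`1 < ‖x‖`. -/
def outerRegion (p : ℕ) [Fact p.Prime] (A : Finset ℕ) : Set (A → ℚ_[p]) :=
  {x | (∀ i, 1 < ‖x i‖) ∧ ∀ q ∈ pairsIn A, padicCoord x q.1 ≠ padicCoord x q.2}

/-- The points of `(ℤ_p ∖ {0})^A` with pairwise distinct coordinates. -/
def innerRegion (p : ℕ) [Fact p.Prime] (A : Finset ℕ) : Set (A → ℚ_[p]) :=
  {y | (∀ i, ‖y i‖ ≤ 1 ∧ y i ≠ 0) ∧ ∀ q ∈ pairsIn A, padicCoord y q.1 ≠ padicCoord y q.2}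

theorem padicCoord_ne_zero {y : A → ℚ_[p]} (hy : y ∈ innerRegion p A) :
    ∀ i ∈ A, padicCoord y i ≠ 0 := fun i hi => by
  rw [padicCoord_of_mem y hi]
  exact (hy.1 _).2

theorem measurableSet_outerRegion : MeasurableSet (outerRegion p A) := by
  simp only [outerRegion, Set.ofPred_and, Set.ofPred_forall]
  refine .inter (.iInter fun i => measurableSet_lt (by fun_prop) (by fun_prop))
    (.iInter fun q => .iInter fun _ => ?_)
  exact (measurableSet_eq_fun (measurable_padicCoord q.1) (measurable_padicCoord q.2)).compl

theorem one_lt_norm_scaledInv_iff (y : ℚ_[p]) :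
    1 < ‖scaledInv (primeUnit p) y‖ ↔ ‖y‖ ≤ 1 ∧ y ≠ 0 := by
  rcases eq_or_ne y 0 with rfl | hy
  · simp [scaledInv]
  · rw [show scaledInv (primeUnit p) y = ((primeUnit p : ℚ_[p]) * y)⁻¹ from rfl, norm_inv,
      one_lt_inv₀ (norm_pos_iff.2 (mul_ne_zero (primeUnit p).ne_zero hy)), ← mem_ball_zero_iff,
      ball_one_eq_closedBall_inv, mem_closedBall_zero_iff, norm_mul, norm_primeUnit,
      mul_le_iff_le_one_right (by simpa using (Fact.out : p.Prime).pos)]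
    exact (and_iff_left hy).symm

theorem preimage_outerRegion :
    (fun (y : A → ℚ_[p]) i => scaledInv (primeUnit p) (y i)) ⁻¹' outerRegion p A =
      innerRegion p A := by
  ext y
  simp only [outerRegion, innerRegion, Set.mem_preimage, Set.mem_ofPred_eq,
    one_lt_norm_scaledInv_iff, padicCoord_scaledInv, ne_eq, inv_inj,
    mul_right_inj' (primeUnit p).ne_zero]

theorem measurableSet_innerRegion : MeasurableSet (innerRegion p A) := by
  rw [← preimage_outerRegion]
  exact (MeasurableEquiv.piCongrRight fun _ => scaledInv (primeUnit p)).measurable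
    measurableSet_outerRegion

theorem norm_primeUnit_cpow_neg (z : ℂ) : (‖(primeUnit p : ℚ_[p])‖ : ℂ) ^ (-z) = (p : ℂ) ^ z := by
  rw [← norm_inv_cpow, norm_inv, norm_primeUnit, inv_inv, Complex.ofReal_natCast]

theorem setIntegral_outerRegion_kobaNielsen (a : ℕ → ℂ) {s : ℕ → ℕ → ℂ}
    (hs : ∀ i j, s i j = s j i) :
    ∫ x in outerRegion p A, kobaNielsen A a s (padicCoord x) ∂padicPi p A =
      (p : ℂ) ^ (#A + ∑ i ∈ A, a i + ∑ q ∈ pairsIn A, s q.1 q.2) *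
        ∫ y in innerRegion p A,
          kobaNielsen A (fun i => -(2 + a i + ∑ j ∈ A.erase i, s i j)) s (padicCoord y)
          ∂padicPi p A := by
  have hinv (_ : A) := measurePreserving_scaledInv (padicHaar p) distribHaarChar_padic (primeUnit p)
  rw [padicPi, setIntegral_pi_eq_setIntegral_preimage_smul _ (fun _ => by fun_prop) hinv _
    measurableSet_outerRegion, preimage_outerRegion, ← integral_const_mul]
  refine setIntegral_congr_fun measurableSet_innerRegion fun y hy => ?_
  have hjacobian : ∏ i, ‖(primeUnit p : ℚ_[p]) * y i ^ 2‖₊⁻¹ =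
      ∏ i ∈ A, ‖(primeUnit p : ℚ_[p]) * padicCoord y i ^ 2‖₊⁻¹ := by
    rw [← prod_coe_sort A]
    exact prod_congr rfl fun i _ => by rw [padicCoord_of_mem y i.2]
  simp only [hjacobian, padicCoord_scaledInv]
  rw [smul_kobaNielsen_inv_mul (primeUnit p).ne_zero hs (padicCoord_ne_zero hy),
    norm_primeUnit_cpow_neg]

end Regions

/-- Lemma A(ii): the integral of `F₁(s, x; N)` over `(ℚ_p ∖ ℤ_p)^{T∖I}` equals
`p^{M(s)}` times an integral over `ℤ_p^{T∖I}`. -/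
theorem F1_integral_formula (p : ℕ) [Fact p.Prime] (N : ℕ) (hN : 4 ≤ N)
    (s : ℕ → ℕ → ℂ) (hsym : ∀ i j, s i j = s j i)
    (I : Finset ℕ) (hI : I ⊆ Tset N)
    (h1 : ∀ i ∈ Tset N \ I,
      (s 1 i).re + (s (N - 1) i).re + (∑ j ∈ (Tset N).erase i, (s i j).re) + 1 < 0)
    (h2 : ∀ q ∈ pairsIn (Tset N \ I), -1 < (s q.1 q.2).re) :
    (∫ x in {x : ↥(Tset N \ I) → ℚ_[p] |
        (∀ i, 1 < ‖x i‖) ∧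
        ∀ q ∈ pairsIn (Tset N \ I), padicCoord x q.1 ≠ padicCoord x q.2},
        (∏ i ∈ Tset N \ I,
          (‖padicCoord x i‖ : ℂ) ^ (s 1 i + s (N - 1) i + ∑ j ∈ I.erase i, s i j)) *
          ∏ q ∈ pairsIn (Tset N \ I),
            (‖padicCoord x q.1 - padicCoord x q.2‖ : ℂ) ^ s q.1 q.2
        ∂(padicPi p ↥(Tset N \ I))) =
      (p : ℂ) ^ (((Tset N \ I).card : ℂ) +
          (∑ i ∈ Tset N \ I, (s 1 i + s (N - 1) i)) +
          (∑ q ∈ (pairsIn (Tset N)).filter (fun q => q.1 ∈ Tset N \ I), s q.1 q.2) +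
          ∑ q ∈ (pairsIn (Tset N)).filter (fun q => q.1 ∈ I ∧ q.2 ∈ Tset N \ I), s q.1 q.2) *
        ∫ y in {y : ↥(Tset N \ I) → ℚ_[p] |
          (∀ i, ‖y i‖ ≤ 1 ∧ y i ≠ 0) ∧
          ∀ q ∈ pairsIn (Tset N \ I), padicCoord y q.1 ≠ padicCoord y q.2},
          (∏ q ∈ pairsIn (Tset N \ I),
            (‖padicCoord y q.1 - padicCoord y q.2‖ : ℂ) ^ s q.1 q.2) /
            ∏ i ∈ Tset N \ I,
              (‖padicCoord y i‖ : ℂ) ^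
                (2 + s 1 i + s (N - 1) i + ∑ j ∈ (Tset N).erase i, s i j)
          ∂(padicPi p ↥(Tset N \ I)) := by
  set A := Tset N \ I
  set a : ℕ → ℂ := fun i => s 1 i + s (N - 1) i + ∑ j ∈ I.erase i, s i j with ha
  have hscale : (#A : ℂ) + ∑ i ∈ A, (s 1 i + s (N - 1) i) +
      ∑ q ∈ pairsIn (Tset N) with q.1 ∈ A, s q.1 q.2 +
      ∑ q ∈ pairsIn (Tset N) with q.1 ∈ I ∧ q.2 ∈ A, s q.1 q.2 =
        #A + ∑ i ∈ A, a i + ∑ q ∈ pairsIn A, s q.1 q.2 := by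
    have herase : ∑ i ∈ A, ∑ j ∈ I.erase i, s i j = ∑ i ∈ A, ∑ j ∈ I, s i j :=
      sum_congr rfl fun i hi => by rw [erase_eq_of_notMem (mem_sdiff.1 hi).2]
    rw [add_assoc, sum_pairsIn_filter_add_sum_pairsIn_filter hI hsym]
    simp only [ha, sum_add_distrib, herase]
    ring
  have hweight (i : ℕ) : 2 + s 1 i + s (N - 1) i + ∑ j ∈ (Tset N).erase i, s i j =
      2 + a i + ∑ j ∈ A.erase i, s i j := by
    rw [← sum_erase_add_sum_sdiff_erase hI]
    ring
  simp_rw [hscale, hweight, ← kobaNielsen_neg]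
  exact setIntegral_outerRegion_kobaNielsen a hsym
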